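/- Let f : ℤⁿ → ℝ ∪ {+∞} be a locally discrete midpoint convex function that in addition satisfies discrete midpoint convexity for all x, y ∈ ℤⁿ with ‖x − y‖∞ = 3. Then f satisfies discrete midpoint convexity for all x, y ∈ ℤⁿ with ‖x − y‖∞ ≥ 2, i.e., f is globally discrete midpoint convex. -/

import Mathlib

/-- The ℓ∞-norm of an integer vector, as a natural number. -/
def linf {n : ℕ} (z : Fin n → ℤ) : ℕ :=
  Finset.univ.sup fun i => (z i).natAbs

/-- Componentwise round-up of (x+y)/2. -/
def avgUp {n : ℕ} (x y : Fin n → ℤ) : Fin n → ℤ :=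
  fun i => ⌈((x i + y i : ℚ)) / 2⌉

/-- Componentwise round-down of (x+y)/2. -/
def avgDown {n : ℕ} (x y : Fin n → ℤ) : Fin n → ℤ :=
  fun i => ⌊((x i + y i : ℚ)) / 2⌋

/-- A set `S ⊆ ℤⁿ` is discrete midpoint convex. -/
def DMCSet {n : ℕ} (S : Set (Fin n → ℤ)) : Prop :=
  ∀ ⦃x⦄, x ∈ S → ∀ ⦃y⦄, y ∈ S → 2 ≤ linf (x - y) →
    avgUp x y ∈ S ∧ avgDown x y ∈ S

/-- `f` satisfies discrete midpoint convexity for the pair `(x, y)`.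
Values are in `ℝ ∪ {+∞}`, modeled as `WithTop ℝ`. -/
def DMCPair {n : ℕ} (f : (Fin n → ℤ) → WithTop ℝ) (x y : Fin n → ℤ) : Prop :=
  f (avgUp x y) + f (avgDown x y) ≤ f x + f y

/-- `f` is globally discrete midpoint convex. -/
def GloballyDMC {n : ℕ} (f : (Fin n → ℤ) → WithTop ℝ) : Prop :=
  ∀ x y : Fin n → ℤ, 2 ≤ linf (x - y) → DMCPair f x y

/-- The effective domain of `f`. -/
def effDom {n : ℕ} (f : (Fin n → ℤ) → WithTop ℝ) : Set (Fin n → ℤ) :=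
  {x | f x ≠ ⊤}

/-- `f` is locally discrete midpoint convex. -/
def LocallyDMC {n : ℕ} (f : (Fin n → ℤ) → WithTop ℝ) : Prop :=
  DMCSet (effDom f) ∧ ∀ x y : Fin n → ℤ, linf (x - y) = 2 → DMCPair f x y

theorem avgUp_apply {n : ℕ} (x y : Fin n → ℤ) (i : Fin n) :
    avgUp x y i = (x i + y i + 1) / 2 := by
  unfold avgUp
  rw [Int.ceil_eq_iff]
  have h1 : 2 * ((x i + y i + 1) / 2) ≤ x i + y i + 1 := by omega
  have h2 : x i + y i ≤ 2 * ((x i + y i + 1) / 2) := by omega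
  have h1' : (2 * ((x i + y i + 1) / 2 : ℤ) : ℚ) ≤ x i + y i + 1 := by exact_mod_cast h1
  have h2' : (x i + y i : ℚ) ≤ 2 * ((x i + y i + 1) / 2 : ℤ) := by exact_mod_cast h2
  constructor <;> linarith

theorem avgDown_apply {n : ℕ} (x y : Fin n → ℤ) (i : Fin n) :
    avgDown x y i = (x i + y i) / 2 := by
  unfold avgDown
  rw [Int.floor_eq_iff]
  have h1 : 2 * ((x i + y i) / 2) ≤ x i + y i := by omega
  have h2 : x i + y i ≤ 2 * ((x i + y i) / 2) + 1 := by omega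
  have h1' : (2 * ((x i + y i) / 2 : ℤ) : ℚ) ≤ x i + y i := by exact_mod_cast h1
  have h2' : (x i + y i : ℚ) ≤ 2 * ((x i + y i) / 2 : ℤ) + 1 := by exact_mod_cast h2
  constructor <;> linarith

theorem natAbs_le_linf {n : ℕ} (z : Fin n → ℤ) (i : Fin n) : (z i).natAbs ≤ linf z :=
  Finset.le_sup (f := fun i => (z i).natAbs) (Finset.mem_univ i)

theorem linf_lt {n m : ℕ} {z : Fin n → ℤ} (hm : 0 < m) (h : ∀ i, (z i).natAbs < m) :
    linf z < m :=
  (Finset.sup_lt_iff hm).2 fun i _ => h i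

theorem exists_natAbs_eq_linf {n : ℕ} {z : Fin n → ℤ} (h : 0 < linf z) :
    ∃ i, (z i).natAbs = linf z := by
  by_contra! hne
  exact lt_irrefl _ (linf_lt h fun i => (natAbs_le_linf z i).lt_of_ne (hne i))

theorem linf_sub_comm {n : ℕ} (x y : Fin n → ℤ) : linf (x - y) = linf (y - x) := by
  refine Finset.sup_congr rfl fun i _ => ?_
  simp only [Pi.sub_apply]
  omega

theorem DMCPair.symm {n : ℕ} {f : (Fin n → ℤ) → WithTop ℝ} {x y : Fin n → ℤ}
    (h : DMCPair f x y) : DMCPair f y x := by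
  have hu : avgUp y x = avgUp x y := by
    ext i; rw [avgUp_apply, avgUp_apply, add_comm (y i)]
  have hd : avgDown y x = avgDown x y := by
    ext i; rw [avgDown_apply, avgDown_apply, add_comm (y i)]
  rw [DMCPair, hu, hd, add_comm (f y)]
  exact h

/-- Discrete midpoint convexity of the pair `(x, y)`, whose distance is attained at a coordinate
where `y` exceeds `x`, follows from that of all pairs at smaller distance: average `x` with the
rounded-down midpoint and `y` with the rounded-up one. The four resulting points form two pairs,
each with the same sum as `(x, y)`. -/
theorem DMCPair.of_smaller_distance {n m : ℕ} {f : (Fin n → ℤ) → WithTop ℝ}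
    (hdom : DMCSet (effDom f))
    (ih : ∀ x y : Fin n → ℤ, 2 ≤ linf (x - y) → linf (x - y) < m → DMCPair f x y)
    (hm : 4 ≤ m) {x y : Fin n → ℤ} (hxy : linf (x - y) = m) {i : Fin n}
    (hi : y i - x i = m) : DMCPair f x y := by
  by_cases hx : f x = ⊤
  · simp [DMCPair, hx]
  by_cases hy : f y = ⊤
  · simp [DMCPair, hy]
  obtain ⟨hv, hu⟩ := hdom hx hy (by omega)
  have hle : ∀ j, (x j - y j).natAbs ≤ m := fun j => hxy ▸ natAbs_le_linf (x - y) j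
  have two_le : ∀ a b : Fin n → ℤ, 2 ≤ b i - a i → 2 ≤ linf (a - b) := fun a b hab => by
    have := natAbs_le_linf (a - b) i
    simp only [Pi.sub_apply] at this
    omega
  have smaller : ∀ a b : Fin n → ℤ, 2 ≤ b i - a i →
      (∀ j, (a j - b j).natAbs < m) → DMCPair f a b := fun a b hab hlt =>
    ih a b (two_le a b hab) (linf_lt (by omega) hlt)
  have same_sum : ∀ a b : Fin n → ℤ, 2 ≤ b i - a i →
      (∀ j, a j + b j = x j + y j ∧ (a j - b j).natAbs < m) →
      f (avgUp x y) + f (avgDown x y) ≤ f a + f b := fun a b hab hlt => by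
    have hup : avgUp x y = avgUp a b := by
      ext j; rw [avgUp_apply, avgUp_apply, (hlt j).1]
    have hdown : avgDown x y = avgDown a b := by
      ext j; rw [avgDown_apply, avgDown_apply, (hlt j).1]
    rw [hup, hdown]
    exact smaller a b hab fun j => (hlt j).2
  have hxu : DMCPair f x (avgDown x y) := by
    refine smaller _ _ ?_ fun j => ?_
    · rw [avgDown_apply]; omega
    · have := hle j
      rw [avgDown_apply]; omega
  have hvy : DMCPair f (avgUp x y) y := by
    refine smaller _ _ ?_ fun j => ?_
    · rw [avgUp_apply]; omega
    · have := hle j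
      rw [avgUp_apply]; omega
  have hab : f (avgUp x y) + f (avgDown x y) ≤
      f (avgUp x (avgDown x y)) + f (avgDown (avgUp x y) y) := by
    refine same_sum _ _ ?_ fun j => ?_
    · simp only [avgUp_apply, avgDown_apply]; omega
    · have := hle j
      simp only [avgUp_apply, avgDown_apply]; omega
  have hba : f (avgUp x y) + f (avgDown x y) ≤
      f (avgDown x (avgDown x y)) + f (avgUp (avgUp x y) y) := by
    refine same_sum _ _ ?_ fun j => ?_
    · simp only [avgUp_apply, avgDown_apply]; omega
    · have := hle j
      simp only [avgUp_apply, avgDown_apply]; omega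
  have hfin : f (avgUp x y) + f (avgDown x y) ≠ ⊤ := WithTop.add_ne_top.2 ⟨hv, hu⟩
  refine (WithTop.add_le_add_iff_right hfin).1 ?_
  calc _ ≤ _ := add_le_add hab hba
    _ = (f (avgUp x (avgDown x y)) + f (avgDown x (avgDown x y))) +
        (f (avgUp (avgUp x y) y) + f (avgDown (avgUp x y) y)) := by abel
    _ ≤ _ := add_le_add hxu hvy
    _ = _ := by abel

/-- A locally discrete midpoint convex function that also satisfies discrete
midpoint convexity at ℓ∞-distance 3 is globally discrete midpoint convex. -/
theorem locallyDMC_and_dist3_globallyDMC {n : ℕ} (f : (Fin n → ℤ) → WithTop ℝ)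
    (h : LocallyDMC f)
    (h3 : ∀ x y : Fin n → ℤ, linf (x - y) = 3 → DMCPair f x y) :
    GloballyDMC f := by
  intro x y
  induction hm : linf (x - y) using Nat.strong_induction_on generalizing x y with
  | _ m ih =>
    intro h2
    obtain rfl | rfl | h4 : m = 2 ∨ m = 3 ∨ 4 ≤ m := by omega
    · exact h.2 x y hm
    · exact h3 x y hm
    have ih' : ∀ a b : Fin n → ℤ, 2 ≤ linf (a - b) → linf (a - b) < m → DMCPair f a b :=
      fun a b hab hlt => ih _ hlt a b rfl hab
    obtain ⟨i, hi⟩ := exists_natAbs_eq_linf (z := x - y) (by omega)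
    rw [hm, Pi.sub_apply] at hi
    obtain hi | hi : y i - x i = m ∨ x i - y i = m := by omega
    · exact .of_smaller_distance h.1 ih' h4 hm hi
    · exact (DMCPair.of_smaller_distance h.1 ih' h4 (linf_sub_comm x y ▸ hm) hi).symm
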